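/- arXiv:2605.19662 — 2 statements merged into one kernel-verified Lean document; each statement's English description precedes it below -/
import Mathlib

section
/- Let Ω be a measurable space, let P₀ and Q₀ be probability measures on Ω, let a, b ∈ ℝ with |a − b| ≥ γ for some γ > 0, let δ ∈ (0, 1/2], and let n ≥ 1. Write P₀^⊗n and Q₀^⊗n for the n-fold product measures on Ωⁿ. Then for every measurable estimator ψ̂ₙ : Ωⁿ → ℝ, the average risk under the two-point prior Π̃ = (1−δ)·δ_{Q₀} + δ·δ_{P₀} satisfies (1−δ) · ∫⁻ |ψ̂ₙ − b| dQ₀^⊗n + δ · ∫⁻ |ψ̂ₙ − a| dP₀^⊗n ≥ (δγ/2) · (1 − TV(P₀^⊗n, Q₀^⊗n)), with integrals in the extended nonnegative reals. -/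
/-! The two-point argument of Le Cam. Let `A = {γ/2 ≤ |psihat - b|}`. Since `a` and `b` are `γ`-separated,
`γ/2 ≤ |psihat - a|` on `Aᶜ`, so the Markov inequality bounds the two risks below by `γ/2 * Q A` and
`γ/2 * P Aᶜ`. As `δ ≤ 1 - δ`, the average risk is at least `δ * γ/2 * (Q A + 1 - P A)`, and
`P A - Q A ≤ tvDist P Q` (`sub_le_tvDist`). -/

open MeasureTheory

/-- Total variation distance between two (finite) measures:
`TV(μ, ν) = sup over measurable sets A of |μ(A) − ν(A)|`. -/
noncomputable def tvDist {Ω : Type*} [MeasurableSpace Ω] (μ ν : Measure Ω) : ℝ :=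
  ⨆ A : {s : Set Ω // MeasurableSet s}, |(μ A.1).toReal - (ν A.1).toReal|

/-- The discrepancy on one set is bounded by the supremum; the bound `1` on the discrepancies makes the real
supremum a genuine one rather than a junk value. -/
theorem sub_le_tvDist {Ω : Type*} [MeasurableSpace Ω] (μ ν : Measure Ω)
    [IsProbabilityMeasure μ] [IsProbabilityMeasure ν] {A : Set Ω} (hA : MeasurableSet A) :
    μ.real A - ν.real A ≤ tvDist μ ν := by
  have hbdd : BddAbove (Set.range fun A : {s : Set Ω // MeasurableSet s} =>
      |(μ A.1).toReal - (ν A.1).toReal|) := by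
    refine ⟨1, ?_⟩
    rintro _ ⟨B, rfl⟩
    have h1 : μ.real B.1 ≤ 1 := measureReal_le_one
    have h2 : ν.real B.1 ≤ 1 := measureReal_le_one
    have h3 : 0 ≤ μ.real B.1 := measureReal_nonneg
    have h4 : 0 ≤ ν.real B.1 := measureReal_nonneg
    change |μ.real B.1 - ν.real B.1| ≤ 1
    rw [abs_le]
    constructor <;> linarith
  exact (le_abs_self _).trans (le_ciSup hbdd ⟨A, hA⟩)

/-- The Markov inequality on a set, in the mixed real/extended form used for both risks. -/
theorem ofReal_mul_real_le_lintegral {Ω : Type*} [MeasurableSpace Ω] (μ : Measure Ω)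
    [IsProbabilityMeasure μ] {A : Set Ω} (hA : MeasurableSet A) {c : ℝ} (hc : 0 ≤ c)
    {f : Ω → ℝ} (hf : ∀ z ∈ A, c ≤ f z) :
    ENNReal.ofReal (c * μ.real A) ≤ ∫⁻ z, ENNReal.ofReal (f z) ∂μ := by
  rw [ENNReal.ofReal_mul hc, ofReal_measureReal]
  calc ENNReal.ofReal c * μ A = ∫⁻ _ in A, ENNReal.ofReal c ∂μ := by simp
    _ ≤ ∫⁻ z in A, ENNReal.ofReal (f z) ∂μ :=
      setLIntegral_mono' hA fun z hz => ENNReal.ofReal_le_ofReal (hf z hz)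
    _ ≤ ∫⁻ z, ENNReal.ofReal (f z) ∂μ := setLIntegral_le_lintegral _ _

/-- Eq. (37) in Appendix C.3: the average risk under the two-point prior
`Π̃ = (1−δ)·δ_{Q₀} + δ·δ_{P₀}` satisfies
`(1−δ)·∫⁻ |ψ̂ₙ − b| dQ₀^⊗n + δ·∫⁻ |ψ̂ₙ − a| dP₀^⊗n ≥ (δγ/2)·(1 − TV(P₀^⊗n, Q₀^⊗n))`. -/
theorem stmt2 {Ω : Type*} [MeasurableSpace Ω]
    (P₀ Q₀ : Measure Ω) [IsProbabilityMeasure P₀] [IsProbabilityMeasure Q₀]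
    (a b γ δ : ℝ) (hγ : 0 < γ) (hab : γ ≤ |a - b|)
    (hδ0 : 0 < δ) (hδ : δ ≤ 1 / 2)
    (n : ℕ) (hn : 1 ≤ n)
    (psihat : (Fin n → Ω) → ℝ) (hpsi : Measurable psihat) :
    ENNReal.ofReal (δ * γ / 2 *
        (1 - tvDist (Measure.pi fun _ : Fin n => P₀) (Measure.pi fun _ : Fin n => Q₀))) ≤
      ENNReal.ofReal (1 - δ) *
          (∫⁻ z, ENNReal.ofReal |psihat z - b| ∂(Measure.pi fun _ : Fin n => Q₀)) +
        ENNReal.ofReal δ *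
          ∫⁻ z, ENNReal.ofReal |psihat z - a| ∂(Measure.pi fun _ : Fin n => P₀) := by
  set P := Measure.pi fun _ : Fin n => P₀
  set Q := Measure.pi fun _ : Fin n => Q₀
  let A : Set (Fin n → Ω) := {z | γ / 2 ≤ |psihat z - b|}
  have hA : MeasurableSet A := measurableSet_le measurable_const (hpsi.sub_const b).abs
  have hQ := ofReal_mul_real_le_lintegral Q hA (half_pos hγ).le
    (f := fun z => |psihat z - b|) fun z hz => hz
  have hP := ofReal_mul_real_le_lintegral P hA.compl (half_pos hγ).le
    (f := fun z => |psihat z - a|) fun z hz => by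
      have hz' : |psihat z - b| < γ / 2 := not_le.mp hz
      have htri := abs_sub_le a (psihat z) b
      rw [abs_sub_comm a (psihat z)] at htri
      linarith
  have hTV := sub_le_tvDist P Q hA
  have hcompl : P.real Aᶜ = 1 - P.real A := probReal_compl_eq_one_sub hA
  have hQ0 : 0 ≤ Q.real A := measureReal_nonneg
  have hP0 : 0 ≤ P.real Aᶜ := measureReal_nonneg
  have h1δ : 0 ≤ 1 - δ := by linarith
  calc ENNReal.ofReal (δ * γ / 2 * (1 - tvDist P Q))
      ≤ ENNReal.ofReal ((1 - δ) * (γ / 2 * Q.real A) + δ * (γ / 2 * P.real Aᶜ)) := by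
        apply ENNReal.ofReal_le_ofReal
        have h1 : δ * γ / 2 * (1 - tvDist P Q) ≤ δ * γ / 2 * (Q.real A + P.real Aᶜ) :=
          mul_le_mul_of_nonneg_left (by linarith) (by positivity)
        have h2 : δ * (γ / 2 * Q.real A) ≤ (1 - δ) * (γ / 2 * Q.real A) :=
          mul_le_mul_of_nonneg_right (by linarith) (by positivity)
        linarith
    _ = ENNReal.ofReal (1 - δ) * ENNReal.ofReal (γ / 2 * Q.real A) +
          ENNReal.ofReal δ * ENNReal.ofReal (γ / 2 * P.real Aᶜ) := by
        rw [ENNReal.ofReal_add (by positivity) (by positivity), ENNReal.ofReal_mul h1δ,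
          ENNReal.ofReal_mul hδ0.le]
    _ ≤ _ := by gcongr
end

section
/- Let Ω be a measurable space, let P₀ and Q₀ be probability measures on Ω with TV(P₀, Q₀) < 1, let a, b ∈ ℝ with |a − b| ≥ γ for some γ > 0, let δ ∈ (0, 1/2], and let n ≥ 1. Then for every measurable estimator ψ̂ₙ : Ωⁿ → ℝ, (1−δ) · ∫⁻ |ψ̂ₙ − b| dQ₀^⊗n + δ · ∫⁻ |ψ̂ₙ − a| dP₀^⊗n ≥ (δγ/2) · (1 − TV(P₀, Q₀))ⁿ > 0. In particular, for fixed context length n, the average estimation risk under the two-point strategic prior is bounded below by a strictly positive constant proportional to δ, uniformly over all estimators. -/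
/-!
The common part of `P₀` and `Q₀` gives the bound. By a Hahn decomposition there is a measure `R`
below both `P₀` and `Q₀` with mass at least `1 - TV(P₀, Q₀)`
(`exists_common_part`). Products are monotone in their factors (`pi_const_mono`), so `R^⊗n` lies
below both product measures and has mass at least `(1 - TV)^n`. As `δ ≤ 1 - δ`, the average risk is
at least `δ ∫ (|ψ̂ - b| + |ψ̂ - a|) dR^⊗n`, and the integrand is at least `|a - b| ≥ γ`. This gives
`δγ(1 - TV)^n`, so the factor `1/2` in the claim is slack.
-/

open MeasureTheory

lemma abs_sub_le_tvDist {Ω : Type*} [MeasurableSpace Ω] (P Q : Measure Ω)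
    [IsProbabilityMeasure P] [IsProbabilityMeasure Q] {s : Set Ω} (hs : MeasurableSet s) :
    |(P s).toReal - (Q s).toReal| ≤ tvDist P Q := by
  -- Boundedness of the family is needed: an unbounded real supremum would be `0`.
  have hbdd : BddAbove (Set.range fun A : {s : Set Ω // MeasurableSet s} =>
      |(P A.1).toReal - (Q A.1).toReal|) := by
    refine ⟨1, ?_⟩
    rintro _ ⟨A, rfl⟩
    have h1 : (P A.1).toReal ≤ 1 := measureReal_le_one
    have h2 : (Q A.1).toReal ≤ 1 := measureReal_le_one
    have h3 : 0 ≤ (P A.1).toReal := ENNReal.toReal_nonneg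
    have h4 : 0 ≤ (Q A.1).toReal := ENNReal.toReal_nonneg
    exact abs_le.2 ⟨by linarith, by linarith⟩
  exact le_ciSup hbdd ⟨s, hs⟩

/-- Two probability measures dominate a common measure of mass at least `1 - TV`: take `P` where
`P ≤ Q` and `Q` where `Q ≤ P`. -/
lemma exists_common_part {Ω : Type*} [MeasurableSpace Ω] (P Q : Measure Ω)
    [IsProbabilityMeasure P] [IsProbabilityMeasure Q] :
    ∃ R : Measure Ω, R ≤ P ∧ R ≤ Q ∧ ENNReal.ofReal (1 - tvDist P Q) ≤ R Set.univ := by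
  obtain ⟨s, hs⟩ := exists_isHahnDecomposition P Q
  have hm := hs.measurableSet
  refine ⟨P.restrict s + Q.restrict sᶜ, ?_, ?_, ?_⟩
  · calc P.restrict s + Q.restrict sᶜ ≤ P.restrict s + P.restrict sᶜ :=
          add_le_add le_rfl hs.ge_on_compl
      _ = P := Measure.restrict_add_restrict_compl hm
  · calc P.restrict s + Q.restrict sᶜ ≤ Q.restrict s + Q.restrict sᶜ :=
          add_le_add hs.le_on le_rfl
      _ = Q := Measure.restrict_add_restrict_compl hm
  · have h1 := abs_le.1 (abs_sub_le_tvDist P Q hm)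
    have h2 : (Q sᶜ).toReal = 1 - (Q s).toReal := probReal_compl_eq_one_sub hm
    simp only [Measure.add_apply, Measure.restrict_apply_univ]
    rw [← ENNReal.ofReal_toReal (measure_ne_top P s),
      ← ENNReal.ofReal_toReal (measure_ne_top Q sᶜ),
      ← ENNReal.ofReal_add ENNReal.toReal_nonneg ENNReal.toReal_nonneg]
    exact ENNReal.ofReal_le_ofReal (by linarith [h1.1])

lemma pi_const_mono {Ω : Type*} [MeasurableSpace Ω] (n : ℕ) {R P : Measure Ω}
    [SigmaFinite R] (h : R ≤ P) :
    Measure.pi (fun _ : Fin n => R) ≤ Measure.pi (fun _ : Fin n => P) := by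
  -- The right-hand side comes from the largest outer measure satisfying the box inequality.
  have key : (Measure.pi fun _ : Fin n => R).toOuterMeasure ≤
      OuterMeasure.pi fun _ : Fin n => P.toOuterMeasure := by
    rw [OuterMeasure.le_pi]
    intro t _
    exact (Measure.pi_pi (fun _ : Fin n => R) t).le.trans
      (Finset.prod_le_prod' fun i _ => h (t i))
  refine Measure.le_iff.2 fun t ht => ?_
  rw [Measure.pi_def (fun _ : Fin n => P), toMeasure_apply _ _ ht]
  exact key t

/-- Quantitative fixed-`n` form of Proposition 4.4 (Unavoidable Strategic Bias): for every
estimator `ψ̂ₙ`, the average risk under the two-point strategic prior is bounded below by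
`(δγ/2)·(1 − TV(P₀, Q₀))ⁿ`, which is strictly positive. -/
theorem stmt4 {Ω : Type*} [MeasurableSpace Ω]
    (P₀ Q₀ : Measure Ω) [IsProbabilityMeasure P₀] [IsProbabilityMeasure Q₀]
    (htv : tvDist P₀ Q₀ < 1)
    (a b γ δ : ℝ) (hγ : 0 < γ) (hab : γ ≤ |a - b|)
    (hδ0 : 0 < δ) (hδ : δ ≤ 1 / 2)
    (n : ℕ) (hn : 1 ≤ n)
    (psihat : (Fin n → Ω) → ℝ) (hpsi : Measurable psihat) :
    ENNReal.ofReal (δ * γ / 2 * (1 - tvDist P₀ Q₀) ^ n) ≤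
        ENNReal.ofReal (1 - δ) *
            (∫⁻ z, ENNReal.ofReal |psihat z - b| ∂(Measure.pi fun _ : Fin n => Q₀)) +
          ENNReal.ofReal δ *
            ∫⁻ z, ENNReal.ofReal |psihat z - a| ∂(Measure.pi fun _ : Fin n => P₀) ∧
      0 < ENNReal.ofReal (δ * γ / 2 * (1 - tvDist P₀ Q₀) ^ n) := by
  have ht : 0 < 1 - tvDist P₀ Q₀ := by linarith
  refine ⟨?_, ENNReal.ofReal_pos.2 (by positivity)⟩
  obtain ⟨R, hRP, hRQ, hR⟩ := exists_common_part P₀ Q₀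
  have : IsFiniteMeasure R := isFiniteMeasure_of_le P₀ hRP
  have hγn : ENNReal.ofReal γ * ENNReal.ofReal (1 - tvDist P₀ Q₀) ^ n ≤
      (∫⁻ z, ENNReal.ofReal |psihat z - b| ∂(Measure.pi fun _ : Fin n => R)) +
        ∫⁻ z, ENNReal.ofReal |psihat z - a| ∂(Measure.pi fun _ : Fin n => R) := by
    rw [← lintegral_add_left (by fun_prop)]
    calc ENNReal.ofReal γ * ENNReal.ofReal (1 - tvDist P₀ Q₀) ^ n
        ≤ ENNReal.ofReal γ * (Measure.pi fun _ : Fin n => R) Set.univ := by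
          rw [Measure.pi_univ]
          simp only [Finset.prod_const, Finset.card_univ, Fintype.card_fin]
          gcongr
      _ = ∫⁻ _, ENNReal.ofReal γ ∂(Measure.pi fun _ : Fin n => R) := (lintegral_const _).symm
      _ ≤ _ := by
          refine lintegral_mono fun z => ?_
          rw [← ENNReal.ofReal_add (abs_nonneg _) (abs_nonneg _)]
          refine ENNReal.ofReal_le_ofReal (hab.trans ?_)
          have := abs_sub_le a (psihat z) b
          rw [abs_sub_comm a (psihat z)] at this
          linarith
  calc ENNReal.ofReal (δ * γ / 2 * (1 - tvDist P₀ Q₀) ^ n)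
      ≤ ENNReal.ofReal (δ * (γ * (1 - tvDist P₀ Q₀) ^ n)) := by
        refine ENNReal.ofReal_le_ofReal ?_
        have : 0 ≤ δ * γ * (1 - tvDist P₀ Q₀) ^ n := by positivity
        linarith
    _ = ENNReal.ofReal δ * (ENNReal.ofReal γ * ENNReal.ofReal (1 - tvDist P₀ Q₀) ^ n) := by
        rw [ENNReal.ofReal_mul hδ0.le, ENNReal.ofReal_mul hγ.le, ENNReal.ofReal_pow ht.le]
    _ ≤ ENNReal.ofReal δ * _ := mul_le_mul_right hγn _
    _ ≤ _ := by
        rw [mul_add]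
        refine add_le_add (mul_le_mul' (ENNReal.ofReal_le_ofReal (by linarith)) ?_)
          (mul_le_mul' le_rfl ?_)
        · exact lintegral_mono' (pi_const_mono n hRQ) le_rfl
        · exact lintegral_mono' (pi_const_mono n hRP) le_rfl
end
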